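/- arXiv:math/9701224 — 2 statements merged into one kernel-verified Lean document; each statement's English description precedes it below -/
import Mathlib

section
/- Let X be a vertex-reinforced random walk on ℤ started at 0 with range R. There is an ε > 0 such that for all integers n ≥ 1, P(3n ∈ R) ≤ (1 − ε)^n; consequently, almost surely R is bounded above (and, by symmetry, bounded below), so P(|R| < ∞) = 1. -/
/-!
The heart of the matter is that, whatever happened before, once the walk has reached a site `k` at or
right of its starting point, it visits `k + 3` with probability at most `1 - 1 / 200`
(`IsVRRW.hit_le`). Iterating over `k = 0, 3, 6, …` gives the geometric decay. An almost surely
nearest-neighbour path unbounded above would visit every `3 n`, which therefore has probability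
zero; reflection (`IsVRRW.neg`) gives the bound from below.

For the three-site estimate, let `a, b, c, d` be the augmented occupation numbers of
`k - 1, k, k + 1, k + 2` while `k + 3` is unvisited. Each visit to `k` is followed by one to `k - 1`
or `k + 1`, so at `k` one has `b ≤ a + c` and the step to `k + 1` has probability `c / (a + c) ≤ c / b`.
With this bound attained, `c / b` would be a martingale if there were no excursions to `k + 2`.
When `c` is small compared to `b`, steps `k + 1 → k + 2`, of probability `d / (b + d)`, are so rare
that `d / (c + 1)` tends to decrease, enough to pay for the effect of the excursions on `c`, and for
the risk `1 / (c + 1)` of a step `k + 2 → k + 3`. Thus `U = 20 c / b + d / (2 (c + 1))`, with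
small corrections when the walk is at `k + 1` or `k + 2`, is a supermartingale while it is below `1`
(`UB_step`, `UC_step`).

Just after the first visit to `k` this cost is above `1`. But as long as `c = d = 1`, the walk at `k`
steps left with probability at least `1 - 1 / b`, so `(b - 1) / 200` is a submartingale in this phase
up to `b = 81`, when `1 - U` takes over. The maximum `hB` of the two combines the phases. The
resulting potential `pot` is zero before the first visit to `k`, at least zero at that visit,
subharmonic always (`pot_step`), and equal to `-1 / 200` once `k + 3` has been visited. Its
expectation therefore stays nonnegative, which is the three-site estimate up to any finite time.
No information on the walk to the left of `k` is needed, since an excursion there either never ends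
or returns to `k` with `c` and `d` unchanged.
-/

open MeasureTheory Filter Set

/-- Augmented occupation number: one plus the number of visits of `X` to `w` up through
time `n`. -/
noncomputable def occ {Ω : Type*} (X : ℕ → Ω → ℤ) (n : ℕ) (w : ℤ) (ω : Ω) : ℝ :=
  1 + ((Finset.range (n + 1)).filter (fun i => X i ω = w)).card

/-- Vertex-reinforced random walk on `ℤ` started at `v`: adapted, starts at `v`, and the
conditional probability of moving to `x` is `1_{|x - Xₙ| = 1} Z(n,x)/(Z(n,Xₙ-1)+Z(n,Xₙ+1))`. -/
def IsVRRW {Ω : Type*} {mΩ : MeasurableSpace Ω} (μ : Measure Ω)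
    (ℱ : Filtration ℕ mΩ) (v : ℤ) (X : ℕ → Ω → ℤ) : Prop :=
  Adapted ℱ X ∧ (∀ ω, X 0 ω = v) ∧
    ∀ n x, (μ[fun ω => if X (n + 1) ω = x then (1 : ℝ) else 0 | ℱ n]) =ᵐ[μ]
      fun ω => if |x - X n ω| = 1 then
        occ X n x ω / (occ X n (X n ω - 1) ω + occ X n (X n ω + 1) ω) else 0

/-! ### The cost functions

Throughout, `b, c, d` are the augmented occupation numbers of `k, k + 1, k + 2`. -/

/-- Cost of the state with the walk at `k`. While it is below `1`, it is superharmonic for the walk;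
the term `20 c / b` keeps `c` small compared to `b`, the other term keeps `d` small compared to
`c`. -/
noncomputable def UB (b c d : ℝ) : ℝ := 20 * c / b + d / (2 * (c + 1))
/-- Cost of the state with the walk at `k + 1`; the last term pays for excursions to `k + 2`. -/
noncomputable def UC (b c d : ℝ) : ℝ := UB (b + 1) c d + 5 * d / (b * (c + 1))
/-- Cost of the state with the walk at `k + 2`; the term `1 / (c + 1)` is the probability of a step to
the yet unvisited site `k + 3`. -/
noncomputable def UD (b c d : ℝ) : ℝ := UC b (c + 1) d + 1 / (c + 1)

lemma UB_lt_one {b c d : ℝ} (hb : 0 < b) (hc : 0 < c) (hd : 0 < d) (h : UB b c d < 1) :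
    20 * c < b ∧ d < 2 * (c + 1) := by
  have h1 : 0 < 20 * c / b := by positivity
  have h2 : 0 < d / (2 * (c + 1)) := by positivity
  unfold UB at h
  constructor
  · exact (div_lt_one hb).1 (by linarith)
  · exact (div_lt_one (by positivity)).1 (by linarith)

lemma UB_succ_le {b c d : ℝ} (hb : 0 < b) (hc : 0 < c) : UB (b + 1) c d ≤ UB b c d := by
  unfold UB
  have : 20 * c / (b + 1) ≤ 20 * c / b := by gcongr; linarith
  linarith

/-- Superharmonicity at `k`, when the step to `k + 1` has probability exactly `c / b`. The terms
`20 c / b` cancel, and the decrease of `d / (2 (c + 1))` pays for the surcharge in `UC`. -/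
lemma UB_step {b c d : ℝ} (hb : 1 ≤ b) (hc : 1 ≤ c) (hd : 1 ≤ d) (h : UB b c d < 1) :
    (b - c) * UB (b + 1) c d + c * UC b (c + 1) d ≤ b * UB b c d := by
  obtain ⟨h1, -⟩ := UB_lt_one (by linarith) (by linarith) (by linarith) h
  have key : b * UB b c d - ((b - c) * UB (b + 1) c d + c * UC b (c + 1) d)
      = c * d / (c + 2) * (1 / (2 * (c + 1)) - 5 / b) := by
    unfold UC UB
    have : b ≠ 0 := by positivity
    have : b + 1 ≠ 0 := by positivity
    have : c + 1 ≠ 0 := by positivity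
    have : c + 2 ≠ 0 := by positivity
    have : c + 1 + 1 = c + 2 := by ring
    rw [this]
    field_simp
    ring
  have : 5 / b ≤ 1 / (2 * (c + 1)) := by
    rw [div_le_div_iff₀ (by positivity) (by positivity)]; linarith
  have : 0 ≤ c * d / (c + 2) * (1 / (2 * (c + 1)) - 5 / b) :=
    mul_nonneg (by positivity) (by linarith)
  linarith

/-- Superharmonicity at `k + 1`, from which the walk steps to `k + 2` with probability
`d / (b + d)`. -/
lemma UC_step {b c d : ℝ} (hb : 1 ≤ b) (hc : 1 ≤ c) (hd : 1 ≤ d) (h : UC b c d < 1) :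
    b * UB (b + 1) c d + d * UD b c (d + 1) ≤ (b + d) * UC b c d := by
  have he : 0 < 5 * d / (b * (c + 1)) := by positivity
  obtain ⟨h1, h2⟩ := UB_lt_one (b := b + 1) (c := c) (d := d) (by linarith) (by linarith) (by linarith)
    (lt_trans (by unfold UC; linarith) h)
  have e1 : UD b c (d + 1) - UB (b + 1) c d ≤ 5 / (c + 1) := by
    have i1 : 20 * (c + 1) / (b + 1) ≤ 20 * c / (b + 1) + 2 / (c + 1) := by
      rw [div_add_div _ _ (by positivity) (by positivity), div_le_div_iff₀ (by positivity) (by positivity)]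
      nlinarith [mul_pos (show 0 < b + 1 by positivity) (show 0 < c + 1 by positivity)]
    have i2 : (d + 1) / (2 * (c + 1 + 1)) ≤ d / (2 * (c + 1)) + (1 / 2) / (c + 1) := by
      have : d / (2 * (c + 1)) + (1 / 2) / (c + 1) = (d + 1) / (2 * (c + 1)) := by
        field_simp
      rw [this]
      gcongr; linarith
    have i3 : 5 * (d + 1) / (b * (c + 1 + 1)) ≤ (3 / 2) / (c + 1) := by
      rw [div_le_div_iff₀ (by positivity) (by positivity)]
      nlinarith
    have i4 : 5 / (c + 1) = 2 / (c + 1) + (1 / 2) / (c + 1) + (3 / 2) / (c + 1) + 1 / (c + 1) := by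
      ring
    unfold UD UC UB
    linarith
  have e2 : b * (5 * d / (b * (c + 1))) = d * (5 / (c + 1)) := by field_simp
  have e3 : (b + d) * UC b c d - (b * UB (b + 1) c d + d * UD b c (d + 1))
      = b * (5 * d / (b * (c + 1))) + d * (5 * d / (b * (c + 1)))
        - d * (UD b c (d + 1) - UB (b + 1) c d) := by
    conv_lhs => rw [show UC b c d = UB (b + 1) c d + 5 * d / (b * (c + 1)) from rfl]
    ring
  have := mul_le_mul_of_nonneg_left e1 (show 0 ≤ d by linarith)
  have : 0 < d * (5 * d / (b * (c + 1))) := by positivity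
  linarith

lemma UB_nonneg {b c d : ℝ} (hb : 0 ≤ b) (hc : 0 ≤ c) (hd : 0 ≤ d) : 0 ≤ UB b c d := by
  unfold UB; positivity

lemma UC_nonneg {b c d : ℝ} (hb : 0 ≤ b) (hc : 0 ≤ c) (hd : 0 ≤ d) : 0 ≤ UC b c d := by
  have := UB_nonneg (b := b + 1) (by linarith) hc hd
  unfold UC; positivity

lemma UD_nonneg {b c d : ℝ} (hb : 0 ≤ b) (hc : 0 ≤ c) (hd : 0 ≤ d) : 0 ≤ UD b c d := by
  have := UC_nonneg (c := c + 1) hb (by linarith) hd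
  unfold UD; positivity

/-! ### Lower bounds for the probability of never visiting `k + 3` -/

/-- Reward of the state with the walk at `k`: a lower bound for the probability of never visiting
`k + 3`. The cost `UB` exceeds `1` just after the first visit to `k`; the second alternative covers
that phase, betting that each of the first visits to `k` is followed by a step to the left. -/
noncomputable def hB (b c d : ℝ) : ℝ :=
  max (max 0 (1 - UB b c d)) (if c = 1 ∧ d = 1 ∧ b ≤ 81 then (b - 1) / 200 else 0)
/-- Reward of the state with the walk at `k + 1`. -/
noncomputable def hC (b c d : ℝ) : ℝ := max 0 (1 - UC b c d)
/-- Reward of the state with the walk at `k + 2`. -/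
noncomputable def hD (b c d : ℝ) : ℝ := max 0 (1 - UD b c d)

lemma hB_nonneg (b c d : ℝ) : 0 ≤ hB b c d := (le_max_left _ _).trans (le_max_left _ _)
lemma hC_nonneg (b c d : ℝ) : 0 ≤ hC b c d := le_max_left _ _
lemma hD_nonneg (b c d : ℝ) : 0 ≤ hD b c d := le_max_left _ _

lemma hB_le_one {b c d : ℝ} (hb : 1 ≤ b) (hc : 1 ≤ c) (hd : 1 ≤ d) : hB b c d ≤ 1 := by
  have := UB_nonneg (b := b) (c := c) (d := d) (by linarith) (by linarith) (by linarith)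
  refine max_le (max_le zero_le_one (by linarith)) ?_
  split_ifs with h
  · linarith [h.2.2]
  · exact zero_le_one

lemma hC_le_one {b c d : ℝ} (hb : 1 ≤ b) (hc : 1 ≤ c) (hd : 1 ≤ d) : hC b c d ≤ 1 := by
  have := UC_nonneg (b := b) (c := c) (d := d) (by linarith) (by linarith) (by linarith)
  exact max_le zero_le_one (by linarith)

lemma hD_le_one {b c d : ℝ} (hb : 1 ≤ b) (hc : 1 ≤ c) (hd : 1 ≤ d) : hD b c d ≤ 1 := by
  have := UD_nonneg (b := b) (c := c) (d := d) (by linarith) (by linarith) (by linarith)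
  exact max_le zero_le_one (by linarith)

lemma hD_step {b c d : ℝ} (hb : 1 ≤ b) (hc : 1 ≤ c) (hd : 1 ≤ d) :
    hD b c d ≤ c / (c + 1) * hC b (c + 1) d := by
  have hU := UC_nonneg (b := b) (c := c + 1) (d := d) (by linarith) (by linarith) (by linarith)
  have hq : c / (c + 1) = 1 - 1 / (c + 1) := by field_simp; ring
  have hq0 : 0 ≤ c / (c + 1) := by positivity
  have hq1 : 0 ≤ 1 / (c + 1) := by positivity
  refine max_le (mul_nonneg hq0 (hC_nonneg _ _ _)) ?_
  calc 1 - UD b c d ≤ c / (c + 1) * (1 - UC b (c + 1) d) := by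
        rw [hq]; unfold UD; nlinarith
    _ ≤ _ := mul_le_mul_of_nonneg_left (le_max_right _ _) hq0

lemma hC_step {b c d : ℝ} (hb : 1 ≤ b) (hc : 1 ≤ c) (hd : 1 ≤ d) :
    hC b c d ≤ b / (b + d) * hB (b + 1) c d + d / (b + d) * hD b c (d + 1) := by
  have hp : 0 ≤ b / (b + d) := by positivity
  have hq : 0 ≤ d / (b + d) := by positivity
  have h0 : 0 ≤ b / (b + d) * hB (b + 1) c d + d / (b + d) * hD b c (d + 1) :=
    add_nonneg (mul_nonneg hp (hB_nonneg _ _ _)) (mul_nonneg hq (hD_nonneg _ _ _))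
  refine max_le h0 ?_
  rcases le_or_gt 1 (UC b c d) with h | h
  · linarith
  have h1 : 1 - UB (b + 1) c d ≤ hB (b + 1) c d := (le_max_right _ _).trans (le_max_left _ _)
  have h2 : 1 - UD b c (d + 1) ≤ hD b c (d + 1) := le_max_right _ _
  calc 1 - UC b c d ≤ (b * (1 - UB (b + 1) c d) + d * (1 - UD b c (d + 1))) / (b + d) := by
        rw [le_div_iff₀ (by positivity)]
        linarith [UC_step hb hc hd h]
    _ = b / (b + d) * (1 - UB (b + 1) c d) + d / (b + d) * (1 - UD b c (d + 1)) := by ring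
    _ ≤ _ := by gcongr

/-- Here `a` is the augmented occupation number of `k - 1`. Only the bound `b ≤ a + c` is needed: if
the step to `k + 1` lowers the cost, its probability is irrelevant because `UB` decreases in `b`;
otherwise the worst case is probability `c / b`, covered by `UB_step`. -/
lemma hB_step {a b c d : ℝ} (ha : 1 ≤ a) (hb : 2 ≤ b) (hc : 1 ≤ c) (hd : 1 ≤ d)
    (hab : b ≤ a + c) :
    hB b c d ≤ a / (a + c) * hB (b + 1) c d + c / (a + c) * hC b (c + 1) d := by
  have hp : 0 ≤ a / (a + c) := by positivity
  have hq : 0 ≤ c / (a + c) := by positivity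
  have hC0 : 0 ≤ c / (a + c) * hC b (c + 1) d := mul_nonneg hq (hC_nonneg _ _ _)
  have h0 : 0 ≤ a / (a + c) * hB (b + 1) c d + c / (a + c) * hC b (c + 1) d :=
    add_nonneg (mul_nonneg hp (hB_nonneg _ _ _)) hC0
  have h1 : 1 - UB (b + 1) c d ≤ hB (b + 1) c d := (le_max_right _ _).trans (le_max_left _ _)
  have h2 : 1 - UC b (c + 1) d ≤ hC b (c + 1) d := le_max_right _ _
  refine max_le (max_le h0 ?_) ?_
  · rcases le_or_gt 1 (UB b c d) with h | h
    · linarith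
    have s1 := UB_succ_le (b := b) (c := c) (d := d) (by linarith) (by linarith)
    have s2 := UB_step (by linarith) hc hd h
    calc 1 - UB b c d
        ≤ (a * (1 - UB (b + 1) c d) + c * (1 - UC b (c + 1) d)) / (a + c) := by
          rw [le_div_iff₀ (by positivity)]
          nlinarith [mul_nonneg (sub_nonneg.2 hab) (sub_nonneg.2 s1)]
      _ = a / (a + c) * (1 - UB (b + 1) c d) + c / (a + c) * (1 - UC b (c + 1) d) := by ring
      _ ≤ _ := by gcongr
  · split_ifs with h
    · obtain ⟨rfl, rfl, hb81⟩ := h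
      have key : b * ((b - 1) / 200) ≤ (b - 1) * hB (b + 1) 1 1 := by
        rcases le_or_gt b 80 with h80 | h80
        · have : (b + 1 - 1) / 200 ≤ hB (b + 1) 1 1 := by
            refine le_trans (le_of_eq ?_) (le_max_right _ _)
            rw [if_pos ⟨rfl, rfl, by linarith⟩]
          nlinarith
        · have : UB (b + 1) 1 1 ≤ 1 / 2 := by
            unfold UB
            have : (20 * 1 : ℝ) / (b + 1) ≤ 1 / 4 := by
              rw [div_le_div_iff₀ (by positivity) (by positivity)]; linarith
            linarith
          nlinarith
      have hratio : (b - 1) / b ≤ a / (a + 1) := by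
        rw [div_le_div_iff₀ (by positivity) (by positivity)]; nlinarith
      calc (b - 1) / 200 ≤ (b - 1) / b * hB (b + 1) 1 1 := by
            rw [div_mul_eq_mul_div, le_div_iff₀ (by positivity)]; linarith
        _ ≤ a / (a + 1) * hB (b + 1) 1 1 :=
            mul_le_mul_of_nonneg_right hratio (hB_nonneg _ _ _)
        _ ≤ _ := by linarith
    · exact h0

/-! ### The potential -/

/-- The potential of the state with position `x` and visit counts `n`: zero before the first visit to
`k`; afterwards, the reward of the state minus `1 / 200`, where the reward is zero once `k + 3` has
been visited. To the left of `k` the reward is the one obtained on returning to `k`. -/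
noncomputable def pot (k x : ℤ) (n : ℤ → ℕ) : ℝ :=
  if n k = 0 then 0 else
    (if n (k + 3) ≠ 0 then 0
      else if x < k then hB (n k + 2) (n (k + 1) + 1) (n (k + 2) + 1)
      else if x = k then hB (n k + 1) (n (k + 1) + 1) (n (k + 2) + 1)
      else if x = k + 1 then hC (n k + 1) (n (k + 1) + 1) (n (k + 2) + 1)
      else if x = k + 2 then hD (n k + 1) (n (k + 1) + 1) (n (k + 2) + 1)
      else 0) - 1 / 200

/-- The visit counts `n` after one more visit, to `y`. -/
def bump (n : ℤ → ℕ) (y : ℤ) : ℤ → ℕ := fun w => n w + if y = w then 1 else 0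

lemma pot_ge (k x : ℤ) (n : ℤ → ℕ) : -(1 / 200) ≤ pot k x n := by
  unfold pot
  split_ifs <;> linarith [hB_nonneg (n k + 2) (n (k + 1) + 1) (n (k + 2) + 1),
    hB_nonneg (n k + 1) (n (k + 1) + 1) (n (k + 2) + 1),
    hC_nonneg (n k + 1) (n (k + 1) + 1) (n (k + 2) + 1),
    hD_nonneg (n k + 1) (n (k + 1) + 1) (n (k + 2) + 1)]

lemma pot_le (k x : ℤ) (n : ℤ → ℕ) :
    pot k x n ≤ (if n k = 0 then 0 else 1 - 1 / 200) - if n k ≠ 0 ∧ n (k + 3) ≠ 0 then 1 else 0 := by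
  have c1 : (1 : ℝ) ≤ n k + 1 := by simp
  have c2 : (1 : ℝ) ≤ n (k + 1) + 1 := by simp
  have c3 : (1 : ℝ) ≤ n (k + 2) + 1 := by simp
  have c4 : (1 : ℝ) ≤ n k + 2 := by linarith
  unfold pot
  split_ifs <;> first | tauto | linarith [hB_le_one c4 c2 c3, hB_le_one c1 c2 c3, hC_le_one c1 c2 c3, hD_le_one c1 c2 c3]

/-- The potential is nonnegative at the first visit to `k`. -/
lemma pot_start {k : ℤ} {n : ℤ → ℕ} (h0 : n k = 1) (h1 : n (k + 1) = 0) (h2 : n (k + 2) = 0)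
    (h3 : n (k + 3) = 0) : 0 ≤ pot k k n := by
  unfold pot
  simp only [h0, h1, h2, h3]
  have : (1 : ℝ) / 200 ≤ hB 2 1 1 := by
    refine le_trans (le_of_eq ?_) (le_max_right _ _)
    norm_num
  norm_num at this ⊢
  linarith

/-- The potential is subharmonic for the transition probabilities of the walk. -/
lemma pot_step {k x : ℤ} {n : ℤ → ℕ}
    (I0 : n k = 0 → x < k ∧ n (k + 1) = 0 ∧ n (k + 2) = 0 ∧ n (k + 3) = 0)
    (I1 : x = k → n k ≤ n (k - 1) + n (k + 1) + 1) :
    pot k x n ≤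
      (1 + n (x - 1) : ℝ) / ((1 + n (x - 1)) + (1 + n (x + 1))) * pot k (x - 1) (bump n (x - 1)) +
      (1 + n (x + 1) : ℝ) / ((1 + n (x - 1)) + (1 + n (x + 1))) * pot k (x + 1) (bump n (x + 1)) := by
  set p : ℝ := (1 + n (x - 1) : ℝ) / ((1 + n (x - 1)) + (1 + n (x + 1))) with hp
  set q : ℝ := (1 + n (x + 1) : ℝ) / ((1 + n (x - 1)) + (1 + n (x + 1))) with hq
  have hp0 : 0 ≤ p := by positivity
  have hq0 : 0 ≤ q := by positivity
  have hpq : p + q = 1 := by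
    rw [hp, hq, ← add_div, div_self (by positivity)]
  by_cases hk : n k = 0
  · obtain ⟨hx, h1, h2, h3⟩ := I0 hk
    have e0 : pot k x n = 0 := by simp [pot, hk]
    have em : pot k (x - 1) (bump n (x - 1)) = 0 := by
      have : x - 1 ≠ k := by omega
      simp [pot, bump, hk, this]
    have ep : 0 ≤ pot k (x + 1) (bump n (x + 1)) := by
      by_cases hxk : x + 1 = k
      · subst hxk
        apply pot_start <;> simp [bump, *]
      · simp [pot, bump, hk, hxk]
    rw [e0, em]
    positivity
  have m1 := pot_ge k (x - 1) (bump n (x - 1))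
  have m2 := pot_ge k (x + 1) (bump n (x + 1))
  have triv : -(1 / 200) ≤ p * pot k (x - 1) (bump n (x - 1)) + q * pot k (x + 1) (bump n (x + 1)) := by
    nlinarith
  have c1 : (1 : ℝ) ≤ n k + 1 := by simp
  have c2 : (1 : ℝ) ≤ n (k + 1) + 1 := by simp
  have c3 : (1 : ℝ) ≤ n (k + 2) + 1 := by simp
  by_cases h3 : n (k + 3) = 0
  swap
  · refine le_trans (le_of_eq ?_) triv
    simp [pot, hk, h3]
  rcases lt_trichotomy x k with hx | hx | hx
  · have e0 : pot k x n = hB (n k + 2) (n (k + 1) + 1) (n (k + 2) + 1) - 1 / 200 := by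
      simp [pot, hk, h3, hx]
    have ey : ∀ y, y ≤ k → pot k y (bump n y)
        = hB (n k + 2) (n (k + 1) + 1) (n (k + 2) + 1) - 1 / 200 := by
      intro y hy
      have y1 : y ≠ k + 1 := by omega
      have y2 : y ≠ k + 2 := by omega
      have y3 : y ≠ k + 3 := by omega
      rcases hy.lt_or_eq with hy | rfl
      · simp [pot, bump, hk, h3, hy, hy.ne, y1, y2, y3]
      · simp [pot, bump, h3]; ring_nf
    rw [e0, ey (x - 1) (by omega), ey (x + 1) (by omega), ← add_mul, hpq, one_mul]
  · subst hx
    have e0 : pot x x n = hB (n x + 1) (n (x + 1) + 1) (n (x + 2) + 1) - 1 / 200 := by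
      simp [pot, hk, h3]
    have em : pot x (x - 1) (bump n (x - 1))
        = hB (n x + 1 + 1) (n (x + 1) + 1) (n (x + 2) + 1) - 1 / 200 := by
      have y1 : x - 1 ≠ x + 1 := by omega
      have y2 : x - 1 ≠ x + 2 := by omega
      have y3 : x - 1 ≠ x + 3 := by omega
      simp [pot, bump, hk, h3, y1, y2, y3]; ring_nf
    have ep : pot x (x + 1) (bump n (x + 1))
        = hC (n x + 1) (n (x + 1) + 1 + 1) (n (x + 2) + 1) - 1 / 200 := by
      simp [pot, bump, hk, h3]
    have I := I1 rfl
    have hk' : 1 ≤ n x := Nat.one_le_iff_ne_zero.2 hk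
    have st := hB_step (a := 1 + n (x - 1)) (b := n x + 1) (c := n (x + 1) + 1)
      (d := n (x + 2) + 1) (by simp) (by norm_cast; omega) c2 c3 (by norm_cast; omega)
    rw [e0, em, ep]
    rw [add_comm (n (x + 1) : ℝ) 1, ← hp, ← hq] at st
    rw [add_comm (n (x + 1) : ℝ) 1]
    linear_combination st + (1 / 200) * hpq
  · by_cases hx1 : x = k + 1
    · subst hx1
      have e0 : pot k (k + 1) n = hC (n k + 1) (n (k + 1) + 1) (n (k + 2) + 1) - 1 / 200 := by
        simp [pot, hk, h3]
      have em : pot k (k + 1 - 1) (bump n (k + 1 - 1))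
          = hB (n k + 1 + 1) (n (k + 1) + 1) (n (k + 2) + 1) - 1 / 200 := by
        simp [pot, bump, h3]
      have ep : pot k (k + 1 + 1) (bump n (k + 1 + 1))
          = hD (n k + 1) (n (k + 1) + 1) (n (k + 2) + 1 + 1) - 1 / 200 := by
        rw [show k + 1 + 1 = k + 2 by ring]
        simp [pot, bump, hk, h3]
      have st := hC_step c1 c2 c3
      rw [e0, em, ep]
      rw [hp, hq] at *
      simp only [add_sub_cancel_right, show k + 1 + 1 = k + 2 by ring] at hpq ⊢
      rw [add_comm (1 : ℝ), add_comm (1 : ℝ)] at *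
      linear_combination st + (1 / 200) * hpq
    · by_cases hx2 : x = k + 2
      · subst hx2
        have e0 : pot k (k + 2) n = hD (n k + 1) (n (k + 1) + 1) (n (k + 2) + 1) - 1 / 200 := by
          simp [pot, hk, h3]
        have em : pot k (k + 2 - 1) (bump n (k + 2 - 1))
            = hC (n k + 1) (n (k + 1) + 1 + 1) (n (k + 2) + 1) - 1 / 200 := by
          rw [show k + 2 - 1 = k + 1 by ring]
          simp [pot, bump, hk, h3]
        have ep : pot k (k + 2 + 1) (bump n (k + 2 + 1)) = - (1 / 200) := by
          rw [show k + 2 + 1 = k + 3 by ring]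
          simp [pot, bump, hk]
        have st := hD_step c1 c2 c3
        have hpe : p = (n (k + 1) + 1 : ℝ) / (n (k + 1) + 1 + 1) := by
          rw [hp, show k + 2 - 1 = k + 1 by ring, show k + 2 + 1 = k + 3 by ring, h3]
          push_cast
          ring_nf
        rw [e0, em, ep]
        rw [← hpe] at st
        linear_combination st + (1 / 200) * hpq
      · refine le_trans (le_of_eq ?_) triv
        simp [pot, hk, h3, hx.not_gt, hx.ne', hx1, hx2]

/-! ### Visit counts and nearest-neighbour paths -/

/-- The number of visits to `w` up through time `t`; thus `occ X t w ω = 1 + cnt X t ω w`. -/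
def cnt {Ω : Type*} (X : ℕ → Ω → ℤ) (t : ℕ) (ω : Ω) (w : ℤ) : ℕ :=
  ((Finset.range (t + 1)).filter (fun i => X i ω = w)).card

lemma cnt_succ {Ω : Type*} (X : ℕ → Ω → ℤ) (t : ℕ) (ω : Ω) :
    cnt X (t + 1) ω = bump (cnt X t ω) (X (t + 1) ω) := by
  funext w
  unfold cnt bump
  rw [Finset.range_add_one (n := t + 1), Finset.filter_insert]
  split_ifs with h
  · rw [Finset.card_insert_of_notMem (by simp)]
  · simp

lemma cnt_zero {Ω : Type*} (X : ℕ → Ω → ℤ) (ω : Ω) (w : ℤ) :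
    cnt X 0 ω w = if X 0 ω = w then 1 else 0 := by
  unfold cnt
  simp [Finset.filter_singleton]
  split_ifs <;> simp

lemma cnt_ne_zero {Ω : Type*} (X : ℕ → Ω → ℤ) (t : ℕ) (ω : Ω) (w : ℤ) :
    cnt X t ω w ≠ 0 ↔ ∃ s ≤ t, X s ω = w := by
  unfold cnt
  rw [← Nat.pos_iff_ne_zero, Finset.card_pos]
  simp only [Finset.Nonempty, Finset.mem_filter, Finset.mem_range, Nat.lt_succ_iff]

lemma measurable_cnt {Ω : Type*} {mΩ : MeasurableSpace Ω} {ℱ : Filtration ℕ mΩ}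
    {X : ℕ → Ω → ℤ} (hX : Adapted ℱ X) (t : ℕ) (w : ℤ) :
    Measurable[ℱ t] (fun ω => cnt X t ω w) := by
  have : (fun ω => cnt X t ω w)
      = fun ω => ∑ i ∈ Finset.range (t + 1), if X i ω = w then 1 else 0 := by
    funext ω; exact Finset.card_filter _ _
  rw [this]
  refine Finset.measurable_sum _ fun i hi => ?_
  have hm : Measurable[ℱ t] (X i) :=
    (hX i).mono (ℱ.mono (Nat.lt_succ_iff.1 (Finset.mem_range.1 hi))) le_rfl
  exact (measurable_of_countable (fun x : ℤ => if x = w then 1 else 0)).comp hm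

/-- The path `x` moves to an adjacent integer at every step. -/
def NN (x : ℕ → ℤ) : Prop := ∀ t, |x (t + 1) - x t| = 1

lemma NN.cases {x : ℕ → ℤ} (h : NN x) (t : ℕ) : x (t + 1) = x t - 1 ∨ x (t + 1) = x t + 1 := by
  rcases (abs_eq zero_le_one).1 (h t) with h | h <;> omega

lemma NN.lt_of_not_hit {x : ℕ → ℤ} (h : NN x) {k : ℤ} (h0 : x 0 ≤ k) {t : ℕ}
    (ht : ∀ s ≤ t, x s ≠ k) : ∀ s ≤ t, x s < k := by
  intro s
  induction s with
  | zero => intro hs; exact lt_of_le_of_ne h0 (ht 0 hs)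
  | succ s ih =>
    intro hs
    have := ih (by omega)
    have := ht _ hs
    rcases h.cases s with h | h <;> omega

/-- A nearest-neighbour path started at or below `k` stays below `k` until it visits `k`. -/
lemma cnt_invariant_zero {Ω : Type*} {X : ℕ → Ω → ℤ} {ω : Ω} (h : NN (fun t => X t ω)) {k : ℤ}
    (h0 : X 0 ω ≤ k) (t : ℕ) (hk : cnt X t ω k = 0) :
    X t ω < k ∧ ∀ j, k < j → cnt X t ω j = 0 := by
  have h1 : ∀ s ≤ t, X s ω ≠ k := by
    intro s hs he
    exact (cnt_ne_zero X t ω k).2 ⟨s, hs, he⟩ hk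
  have h2 := h.lt_of_not_hit h0 h1
  refine ⟨h2 t le_rfl, fun j hj => ?_⟩
  by_contra hne
  obtain ⟨s, hs, he⟩ := (cnt_ne_zero X t ω _).1 hne
  have := h2 s hs
  omega

/-- Every visit to `k`, except one taking place at the present time, is followed by a visit to
`k - 1` or `k + 1`. This bounds the probability of a step `k → k + 1` by `Z(k + 1) / Z(k)`. -/
lemma cnt_invariant_one {Ω : Type*} {X : ℕ → Ω → ℤ} {ω : Ω} (h : NN (fun t => X t ω)) (k : ℤ)
    (t : ℕ) : cnt X t ω k ≤ cnt X t ω (k - 1) + cnt X t ω (k + 1) + if X t ω = k then 1 else 0 := by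
  induction t with
  | zero => simp only [cnt_zero]; split_ifs <;> omega
  | succ t ih =>
    simp only [cnt_succ, bump]
    have := h.cases t
    split_ifs at ih ⊢ <;> omega

/-! ### One step of the walk under the measure -/

section
variable {Ω : Type*} {mΩ : MeasurableSpace Ω} {μ : Measure Ω}
  {ℱ : Filtration ℕ mΩ} {X : ℕ → Ω → ℤ} {v : ℤ}

lemma IsVRRW.measurable (hX : IsVRRW μ ℱ v X) (t : ℕ) : Measurable (X t) :=
  (hX.1 t).mono (ℱ.le t) le_rfl

/-- The walk is symmetric under reflection, so bounds from above also give bounds from below. -/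
lemma IsVRRW.neg (hX : IsVRRW μ ℱ 0 X) : IsVRRW μ ℱ 0 (fun n ω => - X n ω) := by
  have hocc : ∀ n w ω, occ (fun n ω => - X n ω) n w ω = occ X n (-w) ω := by
    intro n w ω
    simp [occ, neg_eq_iff_eq_neg]
  refine ⟨fun n => (hX.1 n).neg, fun ω => by simp [hX.2.1 ω], fun n x => ?_⟩
  have h := hX.2.2 n (-x)
  simp only [hocc, neg_eq_iff_eq_neg]
  refine h.trans (Eventually.of_forall fun ω => ?_)
  have e1 : |x - -X n ω| = |-x - X n ω| := by rw [← abs_neg]; ring_nf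
  have e2 : -(-X n ω - 1) = X n ω + 1 := by ring
  have e3 : -(-X n ω + 1) = X n ω - 1 := by ring
  simp only [e1, e2, e3]
  rw [add_comm (occ X n (X n ω + 1) ω)]

variable [IsProbabilityMeasure μ]

lemma IsVRRW.integrable_ind (hX : IsVRRW μ ℱ v X) (t : ℕ) (x : ℤ) :
    Integrable (fun ω => if X t ω = x then (1 : ℝ) else 0) μ := by
  refine Integrable.of_bound (C := 1) ?_ (Eventually.of_forall fun ω => ?_)
  · exact ((measurable_of_countable (fun y : ℤ => if y = x then (1 : ℝ) else 0)).comp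
      (hX.measurable t)).aestronglyMeasurable
  · split_ifs <;> simp

/-- The transition rule integrated against a bounded `ℱ t`-measurable factor. -/
lemma IsVRRW.setIntegral_mul (hX : IsVRRW μ ℱ v X) (t : ℕ) (x : ℤ) {G : Ω → ℝ} {C : ℝ}
    (hG : StronglyMeasurable[ℱ t] G) (hb : ∀ ω, ‖G ω‖ ≤ C) {A : Set Ω}
    (hA : MeasurableSet[ℱ t] A) :
    ∫ ω in A, G ω * (if X (t + 1) ω = x then (1 : ℝ) else 0) ∂μ
      = ∫ ω in A, G ω * (if |x - X t ω| = 1 then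
        occ X t x ω / (occ X t (X t ω - 1) ω + occ X t (X t ω + 1) ω) else 0) ∂μ := by
  have hi := hX.integrable_ind (t + 1) x
  have h1 := condExp_stronglyMeasurable_mul_of_bound (ℱ.le t) hG hi C (Eventually.of_forall hb)
  have hGi : Integrable (G * fun ω => if X (t + 1) ω = x then (1 : ℝ) else 0) μ :=
    hi.bdd_mul (hG.mono (ℱ.le t)).aestronglyMeasurable (Eventually.of_forall hb)
  have h2 := setIntegral_condExp (ℱ.le t) hGi hA
  refine h2.symm.trans (setIntegral_congr_ae (ℱ.le t _ hA) ?_)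
  filter_upwards [h1, hX.2.2 t x] with ω e1 e2 _
  rw [e1, Pi.mul_apply, e2]

lemma IsVRRW.ae_NN (hX : IsVRRW μ ℱ v X) : ∀ᵐ ω ∂μ, NN (fun t => X t ω) := by
  have key : ∀ (t : ℕ) (x : ℤ), ∀ᵐ ω ∂μ, X (t + 1) ω = x → |x - X t ω| = 1 := by
    intro t x
    have hA : MeasurableSet[ℱ t] {ω | |x - X t ω| ≠ 1} :=
      (hX.1 t) (MeasurableSet.of_discrete (s := {y : ℤ | |x - y| ≠ 1}))
    have h := hX.setIntegral_mul t x (G := fun _ => 1) (C := 1)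
      stronglyMeasurable_const (by simp) hA
    have h0 : ∫ ω in {ω | |x - X t ω| ≠ 1}, (1 : ℝ) * (if |x - X t ω| = 1 then
        occ X t x ω / (occ X t (X t ω - 1) ω + occ X t (X t ω + 1) ω) else 0) ∂μ = 0 := by
      refine setIntegral_eq_zero_of_forall_eq_zero fun ω hω => ?_
      rw [if_neg hω, mul_zero]
    rw [h0] at h
    simp only [one_mul] at h
    rw [setIntegral_eq_zero_iff_of_nonneg_ae
      (Eventually.of_forall fun ω => by dsimp; split_ifs <;> simp)
      (hX.integrable_ind (t + 1) x).integrableOn] at h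
    have h := (ae_restrict_iff' (ℱ.le t _ hA)).1 h
    filter_upwards [h] with ω h hx
    by_contra hne
    simpa [hx] using h hne
  have : ∀ᵐ ω ∂μ, ∀ (t : ℕ) (x : ℤ), X (t + 1) ω = x → |x - X t ω| = 1 :=
    ae_all_iff.2 fun t => ae_all_iff.2 fun x => key t x
  filter_upwards [this] with ω h t
  exact h t _ rfl

/-- One-step estimate in expectation: if `g` is at most the average of `G x` over the transition
probabilities of the walk at time `t`, then `E g ≤ E G(X_{t+1})`. It is proved separately on each
event `{X_t = y}`, where the two possible next positions are deterministic. -/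
lemma IsVRRW.integral_step (hX : IsVRRW μ ℱ v X) (t : ℕ) {G : ℤ → Ω → ℝ} {C : ℝ}
    (hG : ∀ x, StronglyMeasurable[ℱ t] (G x)) (hb : ∀ x ω, ‖G x ω‖ ≤ C)
    {g : Ω → ℝ} (hg : Integrable g μ)
    (hint : Integrable (fun ω => G (X (t + 1) ω) ω) μ)
    (hle : ∀ᵐ ω ∂μ, g ω ≤
      occ X t (X t ω - 1) ω / (occ X t (X t ω - 1) ω + occ X t (X t ω + 1) ω) * G (X t ω - 1) ω +
      occ X t (X t ω + 1) ω / (occ X t (X t ω - 1) ω + occ X t (X t ω + 1) ω) * G (X t ω + 1) ω) :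
    ∫ ω, g ω ∂μ ≤ ∫ ω, G (X (t + 1) ω) ω ∂μ := by
  set A : ℤ → Set Ω := fun y => X t ⁻¹' {y} with hAdef
  have hA : ∀ y, MeasurableSet[ℱ t] (A y) := fun y => (hX.1 t) (measurableSet_singleton y)
  have hA' : ∀ y, MeasurableSet (A y) := fun y => ℱ.le t _ (hA y)
  have hd : Pairwise (Function.onFun Disjoint A) := by
    intro y z hyz
    refine Set.disjoint_left.2 fun ω h1 h2 => hyz ?_
    exact (show X t ω = y from h1).symm.trans h2
  have hU : (⋃ y, A y) = univ := by
    ext ω; simp [hAdef]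
  have s1 := hasSum_integral_iUnion hA' hd hg.integrableOn
  have s2 := hasSum_integral_iUnion hA' hd hint.integrableOn
  rw [hU, Measure.restrict_univ] at s1 s2
  refine hasSum_le (fun y => ?_) s1 s2
  set P : ℤ → Ω → ℝ := fun x ω => if |x - X t ω| = 1 then
        occ X t x ω / (occ X t (X t ω - 1) ω + occ X t (X t ω + 1) ω) else 0 with hP
  have hone : ∀ x, Integrable (fun ω => G x ω * (if X (t + 1) ω = x then (1 : ℝ) else 0)) μ :=
    fun x => (hX.integrable_ind (t + 1) x).bdd_mul
      ((hG x).mono (ℱ.le t)).aestronglyMeasurable (Eventually.of_forall (hb x))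
  have hPi : ∀ x, Integrable (fun ω => G x ω * P x ω) μ := by
    intro x
    refine Integrable.bdd_mul (c := C) ?_ ((hG x).mono (ℱ.le t)).aestronglyMeasurable
      (Eventually.of_forall (hb x))
    exact (integrable_condExp (m := ℱ t)).congr (hX.2.2 t x)
  calc ∫ ω in A y, g ω ∂μ
      ≤ ∫ ω in A y, (G (y - 1) ω * P (y - 1) ω + G (y + 1) ω * P (y + 1) ω) ∂μ := by
        refine setIntegral_mono_on_ae hg.integrableOn ((hPi _).add (hPi _)).integrableOn (hA' y) ?_
        filter_upwards [hle] with ω h hω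
        have hy : X t ω = y := hω
        rw [hy] at h
        refine h.trans (le_of_eq ?_)
        simp only [hP, hy]
        rw [if_pos (by simp), if_pos (by simp)]
        ring
    _ = ∫ ω in A y, (G (y - 1) ω * (if X (t + 1) ω = y - 1 then (1 : ℝ) else 0)
          + G (y + 1) ω * (if X (t + 1) ω = y + 1 then (1 : ℝ) else 0)) ∂μ := by
        rw [integral_add (hPi _).integrableOn (hPi _).integrableOn,
          integral_add (hone _).integrableOn (hone _).integrableOn,
          hX.setIntegral_mul t (y - 1) (hG _) (hb _) (hA y),
          hX.setIntegral_mul t (y + 1) (hG _) (hb _) (hA y)]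
    _ = ∫ ω in A y, G (X (t + 1) ω) ω ∂μ := by
        refine setIntegral_congr_ae (hA' y) ?_
        filter_upwards [hX.ae_NN] with ω h hω
        have hy : X t ω = y := hω
        rcases h.cases t with h | h
        · have h' : X (t + 1) ω = y - 1 := by simpa [hy] using h
          have : ¬ (y - 1 = y + 1) := by omega
          simp [h', this]
        · have h' : X (t + 1) ω = y + 1 := by simpa [hy] using h
          have : ¬ (y + 1 = y - 1) := by omega
          simp [h', this]

/-! ### Growth of the expected potential and decay of hitting probabilities -/

lemma measurable_pot {m : MeasurableSpace Ω} {k : ℤ} {Y : Ω → ℤ} {n : Ω → ℤ → ℕ}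
    (hY : Measurable[m] Y) (hn : ∀ w, Measurable[m] (fun ω => n ω w)) :
    Measurable[m] (fun ω => pot k (Y ω) (n ω)) := by
  have hm : Measurable[m] (fun ω => (Y ω, n ω k, n ω (k + 1), n ω (k + 2), n ω (k + 3))) :=
    hY.prodMk ((hn k).prodMk ((hn (k + 1)).prodMk ((hn (k + 2)).prodMk (hn (k + 3)))))
  -- `pot` depends on the counts only through their values at `k, …, k + 3`.
  have hc := (measurable_of_countable (fun q : ℤ × ℕ × ℕ × ℕ × ℕ => pot k q.1 (fun w =>
    if w = k then q.2.1 else if w = k + 1 then q.2.2.1 else if w = k + 2 then q.2.2.2.1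
    else q.2.2.2.2))).comp hm
  convert hc using 1
  funext ω
  simp [pot]

lemma norm_pot_le (k x : ℤ) (n : ℤ → ℕ) : ‖pot k x n‖ ≤ 1 := by
  rw [Real.norm_eq_abs, abs_le]
  have h1 := pot_ge k x n
  have h2 := pot_le k x n
  constructor
  · linarith
  · refine h2.trans ?_
    split_ifs <;> norm_num

lemma IsVRRW.measurable_pot (hX : IsVRRW μ ℱ v X) (k : ℤ) (t : ℕ) :
    Measurable (fun ω => pot k (X t ω) (cnt X t ω)) :=
  _root_.measurable_pot (hX.measurable t)
    (fun w => (measurable_cnt hX.1 t w).mono (ℱ.le t) le_rfl)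

lemma IsVRRW.integrable_pot (hX : IsVRRW μ ℱ v X) (k : ℤ) (t : ℕ) :
    Integrable (fun ω => pot k (X t ω) (cnt X t ω)) μ :=
  Integrable.of_bound (C := 1) (hX.measurable_pot k t).aestronglyMeasurable
    (Eventually.of_forall fun _ => norm_pot_le _ _ _)

/-- The potential vanishes (or is nonnegative, if `v = k`) at time `0`, and its expectation does not
decrease. -/
lemma IsVRRW.integral_pot_nonneg (hX : IsVRRW μ ℱ v X) {k : ℤ} (hk : v ≤ k) (t : ℕ) :
    0 ≤ ∫ ω, pot k (X t ω) (cnt X t ω) ∂μ := by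
  induction t with
  | zero =>
    refine integral_nonneg fun ω => ?_
    have h0 := hX.2.1 ω
    rcases hk.lt_or_eq with h | rfl
    · simp [pot, cnt_zero, h0, h.ne]
    · simp only [h0]
      apply pot_start <;> simp [cnt_zero, h0]
  | succ t ih =>
    refine ih.trans ?_
    simp only [cnt_succ]
    refine hX.integral_step t (G := fun x ω => pot k x (bump (cnt X t ω) x)) (C := 1)
      (fun x => ?_) (fun _ _ => norm_pot_le _ _ _) (hX.integrable_pot k t) ?_ ?_
    · refine (_root_.measurable_pot measurable_const fun w => ?_).stronglyMeasurable
      exact (measurable_cnt hX.1 t w).add_const _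
    · simpa only [cnt_succ] using hX.integrable_pot k (t + 1)
    · filter_upwards [hX.ae_NN] with ω h
      refine pot_step (fun hz => ?_) (fun hx => ?_)
      · obtain ⟨h1, h2⟩ := cnt_invariant_zero h (by rw [hX.2.1 ω]; exact hk) t hz
        exact ⟨h1, h2 _ (by omega), h2 _ (by omega), h2 _ (by omega)⟩
      · simpa [hx] using cnt_invariant_one h k t

/-- `IsVRRW.hit_le` up to a finite time: the expected potential is nonnegative and by `pot_le` at
most `(1 - 1 / 200) P(k visited) - P(k + 3 visited)`. -/
lemma IsVRRW.hit_by (hX : IsVRRW μ ℱ v X) {k : ℤ} (hk : v ≤ k) (t : ℕ) :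
    μ.real {ω | ∃ s ≤ t, X s ω = k + 3} ≤ (1 - 1 / 200) * μ.real {ω | ∃ s ≤ t, X s ω = k} := by
  have hmeas : ∀ w, MeasurableSet {ω | cnt X t ω w ≠ 0} := fun w =>
    ((measurable_cnt hX.1 t w).mono (ℱ.le t) le_rfl)
      (MeasurableSet.of_discrete (s := {n : ℕ | n ≠ 0}))
  simp only [← cnt_ne_zero]
  have h0 := hX.integral_pot_nonneg hk t
  have hle : ∫ ω, pot k (X t ω) (cnt X t ω) ∂μ
      ≤ ∫ ω, ({ω | cnt X t ω k ≠ 0}.indicator (fun _ => (1 - 1 / 200 : ℝ)) ω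
        - {ω | cnt X t ω (k + 3) ≠ 0}.indicator (fun _ => (1 : ℝ)) ω) ∂μ := by
    refine integral_mono_ae (hX.integrable_pot k t)
      (((integrable_const _).indicator (hmeas k)).sub
        ((integrable_const _).indicator (hmeas (k + 3)))) ?_
    filter_upwards [hX.ae_NN] with ω h
    refine (pot_le _ _ _).trans ?_
    by_cases h1 : cnt X t ω k = 0
    · have h2 := (cnt_invariant_zero h (by rw [hX.2.1 ω]; exact hk) t h1).2 (k + 3) (by omega)
      simp [h1, h2]
    · by_cases h2 : cnt X t ω (k + 3) = 0 <;> simp [h1, h2]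
  rw [integral_sub ((integrable_const _).indicator (hmeas k))
        ((integrable_const _).indicator (hmeas (k + 3))),
    integral_indicator_const _ (hmeas k), integral_indicator_const _ (hmeas (k + 3))] at hle
  simp only [smul_eq_mul, mul_one] at hle
  linarith

/-- Given that `k` is visited, `k + 3` is visited with probability at most `1 - 1 / 200`. -/
lemma IsVRRW.hit_le (hX : IsVRRW μ ℱ v X) {k : ℤ} (hk : v ≤ k) :
    μ.real {ω | ∃ s, X s ω = k + 3} ≤ (1 - 1 / 200) * μ.real {ω | ∃ s, X s ω = k} := by
  have hU : {ω | ∃ s, X s ω = k + 3} = ⋃ t, {ω | ∃ s ≤ t, X s ω = k + 3} := by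
    ext ω
    simp only [Set.mem_ofPred_eq, mem_iUnion]
    exact ⟨fun ⟨s, hs⟩ => ⟨s, s, le_rfl, hs⟩, fun ⟨_, s, _, hs⟩ => ⟨s, hs⟩⟩
  have hmono : Monotone (fun t => {ω | ∃ s ≤ t, X s ω = k + 3}) :=
    fun a b hab ω ⟨s, hs, h⟩ => ⟨s, hs.trans hab, h⟩
  have ht := (ENNReal.tendsto_toReal (measure_ne_top μ _)).comp
    (tendsto_measure_iUnion_atTop (μ := μ) hmono)
  rw [hU]
  refine le_of_tendsto' ht fun t => (hX.hit_by hk t).trans ?_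
  refine mul_le_mul_of_nonneg_left (measureReal_mono ?_) (by norm_num)
  exact fun ω ⟨s, _, h⟩ => ⟨s, h⟩

lemma IsVRRW.decay (hX : IsVRRW μ ℱ 0 X) (n : ℕ) :
    μ.real {ω | ∃ t, X t ω = 3 * (n : ℤ)} ≤ (1 - 1 / 200) ^ n := by
  induction n with
  | zero => simp
  | succ n ih =>
    have h := hX.hit_le (k := 3 * (n : ℤ)) (by positivity)
    have e : (3 * ((n + 1 : ℕ) : ℤ)) = 3 * (n : ℤ) + 3 := by push_cast; ring
    rw [e, pow_succ']
    exact h.trans (mul_le_mul_of_nonneg_left ih (by norm_num))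

lemma IsVRRW.ae_bddAbove (hX : IsVRRW μ ℱ 0 X) :
    ∀ᵐ ω ∂μ, BddAbove {k : ℤ | ∃ n, X n ω = k} := by
  have hnull : μ.real {ω | ∀ n : ℕ, ∃ t, X t ω = 3 * (n : ℤ)} = 0 := by
    refine le_antisymm (ge_of_tendsto' (tendsto_pow_atTop_nhds_zero_of_lt_one
      (r := (1 - 1 / 200 : ℝ)) (by norm_num) (by norm_num)) fun n => ?_) measureReal_nonneg
    exact (measureReal_mono fun ω (h : ∀ n : ℕ, ∃ t, X t ω = 3 * (n : ℤ)) => h n).trans (hX.decay n)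
  rw [measureReal_eq_zero_iff] at hnull
  have hae : ∀ᵐ ω ∂μ, ¬ ∀ n : ℕ, ∃ t, X t ω = 3 * (n : ℤ) := measure_eq_zero_iff_ae_notMem.1 hnull
  filter_upwards [hae, hX.ae_NN] with ω h hN
  push Not at h
  obtain ⟨n, hn⟩ := h
  refine ⟨3 * (n : ℤ), ?_⟩
  rintro _ ⟨t, rfl⟩
  exact (hN.lt_of_not_hit (by simp [hX.2.1 ω]) (fun s _ => hn s) t le_rfl).le

end

/-- For VRRW on `ℤ` started at `0`, there is `ε > 0` with `P(3n ∈ R) ≤ (1 − ε)ⁿ` for all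
`n ≥ 1`; consequently the range is almost surely bounded above, almost surely bounded
below, and almost surely finite. -/
theorem vrrw_range_geometric_decay_and_finite
    {Ω : Type*} {mΩ : MeasurableSpace Ω} (μ : Measure Ω) [IsProbabilityMeasure μ]
    (ℱ : Filtration ℕ mΩ) (X : ℕ → Ω → ℤ) (hX : IsVRRW μ ℱ 0 X) :
    (∃ ε : ℝ, 0 < ε ∧ ∀ n : ℕ, 1 ≤ n →
        (μ {ω | ∃ t, X t ω = 3 * (n : ℤ)}).toReal ≤ (1 - ε) ^ n) ∧
      μ {ω | BddAbove {k : ℤ | ∃ n, X n ω = k}} = 1 ∧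
      μ {ω | BddBelow {k : ℤ | ∃ n, X n ω = k}} = 1 ∧
      μ {ω | Set.Finite {k : ℤ | ∃ n, X n ω = k}} = 1 := by
  have hA := hX.ae_bddAbove
  have hB : ∀ᵐ ω ∂μ, BddBelow {k : ℤ | ∃ n, X n ω = k} := by
    filter_upwards [hX.neg.ae_bddAbove] with ω ⟨M, hM⟩
    refine ⟨-M, ?_⟩
    rintro _ ⟨n, rfl⟩
    linarith [hM ⟨n, rfl⟩]
  have hone : ∀ {p : Ω → Prop}, (∀ᵐ ω ∂μ, p ω) → μ {ω | p ω} = 1 := fun h =>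
    (measure_congr (eventuallyEq_univ.2 h)).trans measure_univ
  refine ⟨⟨1 / 200, by norm_num, fun n _ => hX.decay n⟩, hone hA, hone hB, hone ?_⟩
  filter_upwards [hA, hB] with ω h1 h2
  exact h2.finite_of_bddAbove h1
end

section
/- Let J = [a, b] be an interval of integers containing 0. Let X be a VRRW on ℤ started at 0 (law P, range R), and let X' be a VRRW on J started at 0 (law P_J, occupation numbers Z'). Suppose that P_J-almost surely, liminf_n Z'(n, a+1)/n > 0 and liminf_n Z'(n, b−1)/n > 0. Then P(R ⊆ J) > 0 if and only if P_J( Σ_n (Z'(n,a) + Z'(n,b)) / n² < ∞ ) > 0. -/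
/-!
The walk on `ℤ` and the walk on `J = [a, b]` are compared path by path. Along a path inside `J`
their one-step probabilities agree at interior points. At an endpoint the walk on `J` is forced
inwards, while the walk on `ℤ` goes inwards with probability `Z / (1 + Z) = (1 + 1 / Z)⁻¹`, where
`Z` is the occupation number of the inner neighbour; the outer neighbour has weight `1`, as it was
never visited (`stepZ_eq_stepOn`). Hence, up to time `n`, the walk on `ℤ` has density
`weight a b n = ∏ (1 + uᵢ)⁻¹` with respect to the walk on `J`, where `uᵢ = exitOdds a b p i` is
`1 / Z(i, a+1)` at visits to `a` and `1 / Z(i, b-1)` at visits to `b` (`path_prob_eq`). Summing over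
paths (`confinement_prob`) and letting `n → ∞` gives `P(R ⊆ J) = E_J[∏ (1 + uᵢ)⁻¹]`.

This expectation is positive iff with positive probability the product is positive, i.e. iff
`∑ uᵢ < ∞` with positive probability (`weight_bounded_below_iff`). By the liminf hypothesis, almost
surely `uᵢ` is comparable to `1 / i` at visits to `a` or `b` (`summable_exitOdds_iff`), and
summation by parts turns `∑ (1{X'ᵢ = a} + 1{X'ᵢ = b}) / i` into `∑ (Z'(n,a) + Z'(n,b)) / n²`
(`summable_by_parts`). The degenerate case `a = b` does not occur, since no walk lives on a
single site (`lt_of_isVRRWOn`).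
-/

open MeasureTheory Filter Set

open scoped Classical in
/-- Vertex-reinforced random walk on a set `J ⊆ ℤ` started at `v ∈ J`: the walk stays in
`J` and moves to a neighbor `x ∈ J` with conditional probability proportional to the
augmented occupation number of `x`. -/
def IsVRRWOn {Ω : Type*} {mΩ : MeasurableSpace Ω} (μ : Measure Ω)
    (ℱ : Filtration ℕ mΩ) (J : Set ℤ) (v : ℤ) (X : ℕ → Ω → ℤ) : Prop :=
  Adapted ℱ X ∧ (∀ ω, X 0 ω = v) ∧ (∀ n ω, X n ω ∈ J) ∧
    ∀ n x, (μ[fun ω => if X (n + 1) ω = x then (1 : ℝ) else 0 | ℱ n]) =ᵐ[μ]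
      fun ω => if x ∈ J ∧ |x - X n ω| = 1 then
        occ X n x ω /
          ((if X n ω - 1 ∈ J then occ X n (X n ω - 1) ω else 0) +
           (if X n ω + 1 ∈ J then occ X n (X n ω + 1) ω else 0)) else 0

/-! ### Deterministic paths and their transition weights -/

/-- Augmented occupation number of a deterministic path; `occ X n w ω` unfolds to
`pocc (fun i => X i ω) n w`. -/
noncomputable def pocc (p : ℕ → ℤ) (n : ℕ) (w : ℤ) : ℝ :=
  1 + ((Finset.range (n + 1)).filter (fun i => p i = w)).card

/-- Probability that the walk on `ℤ` jumps to `x` at time `n + 1` after following `p`. -/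
noncomputable def stepZ (p : ℕ → ℤ) (n : ℕ) (x : ℤ) : ℝ :=
  if |x - p n| = 1 then pocc p n x / (pocc p n (p n - 1) + pocc p n (p n + 1)) else 0

open scoped Classical in
/-- Probability that the walk on `J` jumps to `x` at time `n + 1` after following `p`. -/
noncomputable def stepOn (J : Set ℤ) (p : ℕ → ℤ) (n : ℕ) (x : ℤ) : ℝ :=
  if x ∈ J ∧ |x - p n| = 1 then
    pocc p n x /
      ((if p n - 1 ∈ J then pocc p n (p n - 1) else 0) +
       (if p n + 1 ∈ J then pocc p n (p n + 1) else 0)) else 0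

/-- The odds that the walk on `ℤ`, having followed `p` inside `[a, b]`, leaves `[a, b]` at
time `i + 1`: this is nonzero only when `p i` is an endpoint. -/
noncomputable def exitOdds (a b : ℤ) (p : ℕ → ℤ) (i : ℕ) : ℝ :=
  (if p i = a then (pocc p i (a + 1))⁻¹ else 0) + (if p i = b then (pocc p i (b - 1))⁻¹ else 0)

/-- Likelihood ratio, up to time `n`, of the walk on `ℤ` with respect to the walk on `[a, b]`,
for paths inside `[a, b]`. -/
noncomputable def weight (a b : ℤ) (n : ℕ) (p : ℕ → ℤ) : ℝ :=
  ∏ i ∈ Finset.range n, (1 + exitOdds a b p i)⁻¹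

lemma pocc_congr {p q : ℕ → ℤ} {n : ℕ} (h : ∀ i ≤ n, p i = q i) (w : ℤ) :
    pocc p n w = pocc q n w := by
  unfold pocc
  congr 3
  apply Finset.filter_congr
  intro i hi
  rw [h i (by simpa [Nat.lt_succ_iff] using hi)]

lemma one_le_pocc (p : ℕ → ℤ) (n : ℕ) (w : ℤ) : 1 ≤ pocc p n w := by
  simp [pocc]

lemma pocc_pos (p : ℕ → ℤ) (n : ℕ) (w : ℤ) : 0 < pocc p n w :=
  zero_lt_one.trans_le (one_le_pocc p n w)

lemma pocc_le (p : ℕ → ℤ) (n : ℕ) (w : ℤ) : pocc p n w ≤ n + 2 := by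
  have h := Finset.card_filter_le (Finset.range (n + 1)) (fun i => p i = w)
  rw [Finset.card_range] at h
  have : (((Finset.range (n + 1)).filter (fun i => p i = w)).card : ℝ) ≤ n + 1 := by
    exact_mod_cast h
  unfold pocc
  linarith

lemma pocc_succ (p : ℕ → ℤ) (n : ℕ) (w : ℤ) :
    pocc p (n + 1) w = pocc p n w + if p (n + 1) = w then 1 else 0 := by
  unfold pocc
  rw [Finset.range_add_one (n := n + 1), Finset.filter_insert]
  split_ifs with h
  · rw [Finset.card_insert_of_notMem (by simp)]
    push_cast
    ring
  · ring

lemma pocc_unvisited {p : ℕ → ℤ} {n : ℕ} {w : ℤ} (h : ∀ i ≤ n, p i ≠ w) : pocc p n w = 1 := by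
  unfold pocc
  rw [Finset.filter_eq_empty_iff.2]
  · simp
  · intro i hi
    exact h i (by simpa [Nat.lt_succ_iff] using hi)

lemma stepZ_congr {p q : ℕ → ℤ} {n : ℕ} (h : ∀ i ≤ n, p i = q i) (x : ℤ) :
    stepZ p n x = stepZ q n x := by
  simp only [stepZ, pocc_congr h, h n le_rfl]

lemma stepOn_congr (J : Set ℤ) {p q : ℕ → ℤ} {n : ℕ} (h : ∀ i ≤ n, p i = q i) (x : ℤ) :
    stepOn J p n x = stepOn J q n x := by
  simp only [stepOn, pocc_congr h]
  rw [h n le_rfl]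

lemma exitOdds_nonneg (a b : ℤ) (p : ℕ → ℤ) (i : ℕ) : 0 ≤ exitOdds a b p i := by
  have h1 := pocc_pos p i (a + 1)
  have h2 := pocc_pos p i (b - 1)
  unfold exitOdds
  positivity

lemma weight_congr (a b : ℤ) {p q : ℕ → ℤ} {n : ℕ} (h : ∀ i ≤ n, p i = q i) :
    weight a b n p = weight a b n q := by
  unfold weight
  apply Finset.prod_congr rfl
  intro i hi
  have hi' : i < n := by simpa using hi
  simp only [exitOdds, h i hi'.le, pocc_congr (fun j (hj : j ≤ i) => h j (hj.trans hi'.le))]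

lemma weight_pos (a b : ℤ) (n : ℕ) (p : ℕ → ℤ) : 0 < weight a b n p :=
  Finset.prod_pos fun i _ => inv_pos.2 (by linarith [exitOdds_nonneg a b p i])

lemma weight_succ (a b : ℤ) (n : ℕ) (p : ℕ → ℤ) :
    weight a b (n + 1) p = weight a b n p * (1 + exitOdds a b p n)⁻¹ :=
  Finset.prod_range_succ _ _

lemma weight_antitone (a b : ℤ) (p : ℕ → ℤ) : Antitone fun n => weight a b n p := by
  refine antitone_nat_of_succ_le fun n => ?_
  rw [weight_succ]
  exact mul_le_of_le_one_right (weight_pos a b n p).le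
    (inv_le_one_of_one_le₀ (by linarith [exitOdds_nonneg a b p n]))

/-- As long as the path stays in `[a, b]`, the one-step laws of the two walks differ exactly by
the factor `(1 + exitOdds)⁻¹`: the outer neighbour of an endpoint still has weight `1`. -/
lemma stepZ_eq_stepOn {a b : ℤ} (hab : a < b) {p : ℕ → ℤ} {n : ℕ}
    (hp : ∀ i ≤ n, p i ∈ Set.Icc a b) {x : ℤ} (hx : x ∈ Set.Icc a b) :
    stepZ p n x = stepOn (Set.Icc a b) p n x * (1 + exitOdds a b p n)⁻¹ := by
  have hn := hp n le_rfl
  by_cases h1 : |x - p n| = 1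
  swap
  · simp [stepZ, stepOn, h1]
  simp only [stepZ, stepOn, h1, hx, and_self, if_true, exitOdds]
  have hx' := hx
  rw [Set.mem_Icc] at hn hx'
  by_cases hA : p n = a
  · have hB : p n ≠ b := by omega
    have hxa : x = a + 1 := by
      rcases (abs_eq zero_le_one).1 h1 with h | h <;> omega
    have m1 : a - 1 ∉ Set.Icc a b := by simp
    have m2 : a + 1 ∈ Set.Icc a b := by simp; omega
    have hu : pocc p n (a - 1) = 1 := pocc_unvisited fun i hi h => by
      have := (hp i hi).1; omega
    have hpos := pocc_pos p n (a + 1)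
    rw [if_pos hA, if_neg hB, hA, hxa, if_neg m1, if_pos m2, hu]
    field_simp
    ring
  by_cases hB : p n = b
  · have hxb : x = b - 1 := by
      rcases (abs_eq zero_le_one).1 h1 with h | h <;> omega
    have m1 : b - 1 ∈ Set.Icc a b := by simp; omega
    have m2 : b + 1 ∉ Set.Icc a b := by simp
    have hu : pocc p n (b + 1) = 1 := pocc_unvisited fun i hi h => by
      have := (hp i hi).2; omega
    have hpos := pocc_pos p n (b - 1)
    rw [if_neg hA, if_pos hB, hB, hxb, if_pos m1, if_neg m2, hu]
    field_simp
    ring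
  · have m1 : p n - 1 ∈ Set.Icc a b := by rw [Set.mem_Icc]; omega
    have m2 : p n + 1 ∈ Set.Icc a b := by rw [Set.mem_Icc]; omega
    simp [hA, hB, m1, m2]

/-! ### Convergence of the weights along a path -/

lemma one_add_sum_le_prod {u : ℕ → ℝ} (hu : ∀ i, 0 ≤ u i) (n : ℕ) :
    1 + ∑ i ∈ Finset.range n, u i ≤ ∏ i ∈ Finset.range n, (1 + u i) := by
  induction n with
  | zero => simp
  | succ n ih =>
    rw [Finset.sum_range_succ, Finset.prod_range_succ]
    have : 0 ≤ ∑ i ∈ Finset.range n, u i := Finset.sum_nonneg fun i _ => hu i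
    nlinarith [hu n, mul_nonneg this (hu n)]

lemma weight_bounded_below_iff (a b : ℤ) (p : ℕ → ℤ) :
    (∃ δ > 0, ∀ n, δ ≤ weight a b n p) ↔ Summable (exitOdds a b p) := by
  have hu := exitOdds_nonneg a b p
  have hw : ∀ n, weight a b n p = (∏ i ∈ Finset.range n, (1 + exitOdds a b p i))⁻¹ :=
    fun n => by rw [weight, Finset.prod_inv_distrib]
  constructor
  · rintro ⟨δ, hδ, h⟩
    refine summable_of_sum_range_le (c := δ⁻¹) hu fun n => ?_
    have h1 := one_add_sum_le_prod hu n
    have h2 := inv_anti₀ hδ (h n)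
    rw [hw, inv_inv] at h2
    linarith
  · intro h
    refine ⟨(Real.exp (∑' i, exitOdds a b p i))⁻¹, by positivity, fun n => ?_⟩
    rw [hw]
    refine inv_anti₀ (Finset.prod_pos fun i _ => by linarith [hu i]) ?_
    calc ∏ i ∈ Finset.range n, (1 + exitOdds a b p i)
        ≤ ∏ i ∈ Finset.range n, Real.exp (exitOdds a b p i) :=
          Finset.prod_le_prod (fun i _ => by linarith [hu i])
            fun i _ => by linarith [Real.add_one_le_exp (exitOdds a b p i)]
      _ = Real.exp (∑ i ∈ Finset.range n, exitOdds a b p i) := (Real.exp_sum _ _).symm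
      _ ≤ _ := Real.exp_le_exp.2 (h.sum_le_tsum _ fun i _ => hu i)

/-- Summation by parts: if `E` has increments `e ≥ 0` and grows at most linearly, then
`∑ E n / n²` and `∑ e n / n` converge or diverge together. The series are compared, with the
index shifted by one, through
`E (n+1) / ((n+1)(n+2)) = E (n+1) / (n+1) - E (n+2) / (n+2) + e (n+2) / (n+2)`. -/
lemma summable_by_parts {E e : ℕ → ℝ} (he : ∀ n, 0 ≤ e n) (hE0 : ∀ n, 0 ≤ E n)
    (hstep : ∀ n, E (n + 1) = E n + e (n + 1)) {C : ℝ} (hC : ∀ n : ℕ, E n ≤ C * (n + 1)) :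
    (Summable fun n : ℕ => E n / (n : ℝ) ^ 2) ↔ Summable fun n : ℕ => e n / (n : ℝ) := by
  have key : ∀ N : ℕ, ∑ n ∈ Finset.range N, E (n + 1) / (((n : ℝ) + 1) * (n + 2)) =
      E 1 - E (N + 1) / (N + 1) + ∑ n ∈ Finset.range N, e (n + 2) / ((n : ℝ) + 2) := by
    intro N
    induction N with
    | zero => simp
    | succ N ih =>
      rw [Finset.sum_range_succ, Finset.sum_range_succ, ih, hstep (N + 1)]
      push_cast
      have h1 : (N : ℝ) + 1 ≠ 0 := by positivity
      have h2 : (N : ℝ) + 2 ≠ 0 := by positivity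
      have h3 : (N : ℝ) + 1 + 1 ≠ 0 := by positivity
      have h4 : (N : ℝ) + 1 + 1 = N + 2 := by ring
      rw [h4]
      field_simp
      ring
  have hC0 : 0 ≤ C := by have := hC 0; have := hE0 0; norm_num at *; linarith
  have hb : ∀ N : ℕ, 0 ≤ E (N + 1) / ((N : ℝ) + 1) ∧ E (N + 1) / ((N : ℝ) + 1) ≤ 2 * C := by
    intro N
    refine ⟨div_nonneg (hE0 _) (by positivity), ?_⟩
    rw [div_le_iff₀ (by positivity)]
    have := hC (N + 1)
    push_cast at this
    nlinarith [mul_nonneg hC0 (Nat.cast_nonneg (α := ℝ) N)]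
  have nn1 : ∀ n : ℕ, 0 ≤ E (n + 1) / (((n : ℝ) + 1) * (n + 2)) :=
    fun n => div_nonneg (hE0 _) (by positivity)
  have nn2 : ∀ n : ℕ, 0 ≤ e (n + 2) / ((n : ℝ) + 2) := fun n => div_nonneg (he _) (by positivity)
  have main : (Summable fun n : ℕ => E (n + 1) / (((n : ℝ) + 1) * (n + 2))) ↔
      Summable fun n : ℕ => e (n + 2) / ((n : ℝ) + 2) := by
    constructor
    · intro h
      refine summable_of_sum_range_le
        (c := 2 * C + ∑' n : ℕ, E (n + 1) / (((n : ℝ) + 1) * (n + 2))) nn2 fun N => ?_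
      have h1 := h.sum_le_tsum (Finset.range N) fun i _ => nn1 i
      have h2 := key N
      have h3 := hb N
      have h4 := hE0 1
      linarith
    · intro h
      refine summable_of_sum_range_le
        (c := E 1 + ∑' n : ℕ, e (n + 2) / ((n : ℝ) + 2)) nn1 fun N => ?_
      have h1 := h.sum_le_tsum (Finset.range N) fun i _ => nn2 i
      have h2 := key N
      have h3 := hb N
      linarith
  rw [← summable_nat_add_iff 1 (f := fun n : ℕ => E n / (n : ℝ) ^ 2),
    ← summable_nat_add_iff 2 (f := fun n : ℕ => e n / (n : ℝ))]
  push_cast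
  rw [← main]
  constructor <;> intro h
  · refine Summable.of_nonneg_of_le nn1 (fun n => ?_) h
    exact div_le_div_of_nonneg_left (hE0 _) (by positivity) (by nlinarith)
  · refine Summable.of_nonneg_of_le (fun n => div_nonneg (hE0 _) (by positivity)) (fun n => ?_)
      (h.mul_left 2)
    rw [← mul_div_assoc, div_le_div_iff₀ (by positivity) (by positivity)]
    have := hE0 (n + 1)
    have hn : (0 : ℝ) ≤ n := Nat.cast_nonneg n
    have : ((n : ℝ) + 1) * (n + 2) ≤ 2 * ((n : ℝ) + 1) ^ 2 := by nlinarith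
    nlinarith [mul_le_mul_of_nonneg_left this (hE0 (n + 1))]

/-- Under linear growth of the local times at `a + 1` and `b - 1`, the exit odds at time `n` are
comparable to `1 / n` at visits to `a` or `b`. -/
lemma summable_exitOdds_iff {a b : ℤ} {p : ℕ → ℤ} {c : ℝ} (hc : 0 < c)
    (h1 : ∀ᶠ n : ℕ in atTop, c * n ≤ pocc p n (a + 1))
    (h2 : ∀ᶠ n : ℕ in atTop, c * n ≤ pocc p n (b - 1)) :
    Summable (exitOdds a b p) ↔
      Summable fun n : ℕ => (pocc p n a + pocc p n b) / (n : ℝ) ^ 2 := by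
  set e : ℕ → ℝ := fun n => (if p n = a then 1 else 0) + (if p n = b then 1 else 0) with he
  have he0 : ∀ n, 0 ≤ e n := fun n => by simp only [he]; positivity
  rw [summable_by_parts (e := e) (C := 4) he0
    (fun n => add_nonneg (pocc_pos p n a).le (pocc_pos p n b).le)
    (fun n => by simp only [he, pocc_succ]; ring)
    (fun n => by have := pocc_le p n a; have := pocc_le p n b; linarith [n.cast_nonneg (α := ℝ)])]
  constructor <;> intro h
  · refine Summable.of_norm_bounded_eventually_nat (h.mul_left 3) ?_
    filter_upwards [eventually_ge_atTop 1] with n hn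
    have hn' : (1 : ℝ) ≤ n := by exact_mod_cast hn
    have hinv : ∀ w, (n : ℝ)⁻¹ ≤ 3 * (pocc p n w)⁻¹ := fun w => by
      have hle := pocc_le p n w
      have hpos := pocc_pos p n w
      rw [← div_eq_mul_inv, inv_eq_one_div, div_le_div_iff₀ (by linarith) hpos]
      linarith
    rw [Real.norm_of_nonneg (div_nonneg (he0 n) (by linarith)), div_eq_mul_inv]
    have i1 := hinv (a + 1)
    have i2 := hinv (b - 1)
    simp only [he, exitOdds]
    split_ifs <;> linarith
  · refine Summable.of_norm_bounded_eventually_nat (h.mul_left c⁻¹) ?_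
    filter_upwards [eventually_ge_atTop 1, h1, h2] with n hn g1 g2
    have hn' : (1 : ℝ) ≤ n := by exact_mod_cast hn
    have hpos : 0 < c * n := by positivity
    have i1 := inv_anti₀ hpos g1
    have i2 := inv_anti₀ hpos g2
    rw [Real.norm_of_nonneg (exitOdds_nonneg a b p n), div_eq_mul_inv, mul_left_comm, ← mul_inv]
    simp only [he, exitOdds]
    split_ifs <;> linarith

/-- `liminf` over `ℝ` is meaningful here because the ratio is nonnegative. -/
lemma eventually_linear_of_liminf_pos {p : ℕ → ℤ} {w : ℤ}
    (h : 0 < liminf (fun n : ℕ => pocc p n w / (n : ℝ)) atTop) :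
    ∃ c > 0, ∀ᶠ n : ℕ in atTop, c * n ≤ pocc p n w := by
  obtain ⟨c, hc0, hc⟩ := exists_between h
  refine ⟨c, hc0, ?_⟩
  have hbdd : IsBoundedUnder (· ≥ ·) atTop fun n : ℕ => pocc p n w / (n : ℝ) :=
    isBoundedUnder_of ⟨0, fun n => div_nonneg (pocc_pos p n w).le n.cast_nonneg⟩
  filter_upwards [eventually_lt_of_lt_liminf hc hbdd, eventually_ge_atTop 1] with n hn h1
  have : (0 : ℝ) < n := by exact_mod_cast h1
  exact ((lt_div_iff₀ this).1 hn).le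

/-- The likelihood ratio of a path stays away from `0` exactly when the series of the theorem
converges. -/
lemma weight_bounded_below_iff_summable {a b : ℤ} {p : ℕ → ℤ}
    (h1 : 0 < liminf (fun n : ℕ => pocc p n (a + 1) / (n : ℝ)) atTop)
    (h2 : 0 < liminf (fun n : ℕ => pocc p n (b - 1) / (n : ℝ)) atTop) :
    (∃ δ > 0, ∀ n, δ ≤ weight a b n p) ↔
      Summable fun n : ℕ => (pocc p n a + pocc p n b) / (n : ℝ) ^ 2 := by
  obtain ⟨c1, hc1, g1⟩ := eventually_linear_of_liminf_pos h1
  obtain ⟨c2, hc2, g2⟩ := eventually_linear_of_liminf_pos h2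
  rw [weight_bounded_below_iff, summable_exitOdds_iff (lt_min hc1 hc2)]
  · filter_upwards [g1] with n hn
    exact (mul_le_mul_of_nonneg_right (min_le_left _ _) n.cast_nonneg).trans hn
  · filter_upwards [g2] with n hn
    exact (mul_le_mul_of_nonneg_right (min_le_right _ _) n.cast_nonneg).trans hn

/-! ### Laws of finite paths -/

/-- Multiplication rule: if the conditional law of `X (n + 1)` given `ℱ n` is `step`, a function
of the path up to time `n`, then extending a finite path by one step multiplies its probability
by `step`. -/
lemma path_prob_succ {Ω : Type*} {mΩ : MeasurableSpace Ω} (μ : Measure Ω) [IsProbabilityMeasure μ]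
    (ℱ : Filtration ℕ mΩ) {X : ℕ → Ω → ℤ} (hX : Adapted ℱ X)
    {step : (ℕ → ℤ) → ℕ → ℤ → ℝ}
    (hcongr : ∀ {p q : ℕ → ℤ} {n : ℕ}, (∀ i ≤ n, p i = q i) → ∀ x, step p n x = step q n x)
    (hstep : ∀ n x, (μ[fun ω => if X (n + 1) ω = x then (1 : ℝ) else 0 | ℱ n]) =ᵐ[μ]
      fun ω => step (fun i => X i ω) n x) (p : ℕ → ℤ) (n : ℕ) :
    μ.real {ω | ∀ i ≤ n + 1, X i ω = p i} =
      μ.real {ω | ∀ i ≤ n, X i ω = p i} * step p n (p (n + 1)) := by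
  set A : Set Ω := {ω | ∀ i ≤ n, X i ω = p i} with hA
  set B : Set Ω := {ω | X (n + 1) ω = p (n + 1)} with hB
  have hAm : MeasurableSet[ℱ n] A := by
    have : A = ⋂ i, ⋂ (_ : i ≤ n), X i ⁻¹' {p i} := by ext ω; simp [hA]
    rw [this]
    refine MeasurableSet.iInter fun i => MeasurableSet.iInter fun hi => ?_
    exact ℱ.mono hi _ (hX i (measurableSet_singleton _))
  have hBm : MeasurableSet B := ℱ.le (n + 1) _ (hX (n + 1) (measurableSet_singleton (p (n + 1))))
  have hAB : {ω | ∀ i ≤ n + 1, X i ω = p i} = B ∩ A := by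
    ext ω
    simp only [hA, hB, Set.mem_inter_iff, Set.mem_ofPred_eq]
    refine ⟨fun h => ⟨h _ le_rfl, fun i hi => h i (by omega)⟩, fun h i hi => ?_⟩
    rcases Nat.lt_or_eq_of_le hi with h' | rfl
    · exact h.2 i (by omega)
    · exact h.1
  have hf : (fun ω => if X (n + 1) ω = p (n + 1) then (1 : ℝ) else 0) = B.indicator 1 := by
    ext ω; simp [hB, Set.indicator]
  have hint : Integrable (fun ω => if X (n + 1) ω = p (n + 1) then (1 : ℝ) else 0) μ := by
    rw [hf]; exact (integrable_const (1 : ℝ)).indicator hBm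
  have h1 := setIntegral_condExp (ℱ.le n) hint hAm
  have h2 : ∫ ω in A, (μ[fun ω => if X (n + 1) ω = p (n + 1) then (1 : ℝ) else 0 | ℱ n]) ω ∂μ =
      ∫ _ in A, step p n (p (n + 1)) ∂μ := by
    refine setIntegral_congr_ae (ℱ.le n _ hAm) ?_
    filter_upwards [hstep n (p (n + 1))] with ω hω hωA
    rw [hω]
    exact hcongr hωA _
  rw [h2, hf, integral_indicator_one hBm, setIntegral_const, measureReal_restrict_apply hBm,
    smul_eq_mul] at h1
  rw [hAB, ← h1]

/-- For a path inside `[a, b]`, the law of the walk on `ℤ` has density `weight` with respect to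
the law of the walk on `[a, b]`. -/
lemma path_prob_eq {Ω Ω' : Type*} {mΩ : MeasurableSpace Ω} {mΩ' : MeasurableSpace Ω'}
    (μ : Measure Ω) [IsProbabilityMeasure μ] (μ' : Measure Ω') [IsProbabilityMeasure μ']
    (ℱ : Filtration ℕ mΩ) (ℱ' : Filtration ℕ mΩ') {a b : ℤ} (hab : a < b)
    {X : ℕ → Ω → ℤ} (hX : IsVRRW μ ℱ 0 X)
    {X' : ℕ → Ω' → ℤ} (hX' : IsVRRWOn μ' ℱ' (Set.Icc a b) 0 X')
    (p : ℕ → ℤ) (n : ℕ) (hp : ∀ i ≤ n, p i ∈ Set.Icc a b) :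
    μ.real {ω | ∀ i ≤ n, X i ω = p i} =
      weight a b n p * μ'.real {ω | ∀ i ≤ n, X' i ω = p i} := by
  induction n with
  | zero =>
    by_cases h : p 0 = 0
    · simp [weight, hX.2.1, hX'.2.1, h]
    · simp [weight, hX.2.1, hX'.2.1, Ne.symm h]
  | succ n ih =>
    have hp' : ∀ i ≤ n, p i ∈ Set.Icc a b := fun i hi => hp i (by omega)
    rw [path_prob_succ μ ℱ hX.1 stepZ_congr hX.2.2,
      path_prob_succ μ' ℱ' hX'.1 (stepOn_congr (Set.Icc a b)) hX'.2.2.2, ih hp',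
      stepZ_eq_stepOn hab hp' (hp (n + 1) le_rfl), weight_succ]
    ring

/-- A walk cannot live on the single site `{0}`: it would have to stay put. -/
lemma lt_of_isVRRWOn {Ω' : Type*} {mΩ' : MeasurableSpace Ω'} (μ' : Measure Ω')
    [IsProbabilityMeasure μ'] (ℱ' : Filtration ℕ mΩ') {a b : ℤ} (ha : a ≤ 0) (hb : 0 ≤ b)
    {X' : ℕ → Ω' → ℤ} (hX' : IsVRRWOn μ' ℱ' (Set.Icc a b) 0 X') : a < b := by
  by_contra hab
  obtain rfl : a = 0 := by omega
  obtain rfl : b = 0 := by omega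
  have h0 : ∀ n ω, X' n ω = 0 := fun n ω => by
    have := hX'.2.2.1 n ω; simpa using this
  have h := path_prob_succ μ' ℱ' hX'.1 (stepOn_congr (Set.Icc 0 0)) hX'.2.2.2 (fun _ => 0) 0
  simp [h0, stepOn] at h

/-- Extension of a finite path to all times, constant after time `n`. -/
def extendPath (n : ℕ) (q : Fin (n + 1) → ℤ) (i : ℕ) : ℤ := q ⟨min i n, by omega⟩

lemma cylinder_eq {Ω : Type*} (X : ℕ → Ω → ℤ) {n : ℕ} (q : Fin (n + 1) → ℤ) :
    (fun ω (i : Fin (n + 1)) => X i ω) ⁻¹' {q} = {ω | ∀ i ≤ n, X i ω = extendPath n q i} := by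
  ext ω
  simp only [Set.mem_preimage, Set.mem_singleton_iff, funext_iff, Set.mem_ofPred_eq]
  constructor
  · intro h i hi
    simpa [extendPath, hi] using h ⟨i, by omega⟩
  · intro h i
    have hi : (i : ℕ) ≤ n := by omega
    simpa [extendPath, hi] using h i hi

/-- Change of measure, together with the measurability it needs: the probability that the walk on `ℤ` stays in `[a, b]` up to time `n` is
the expected `weight` of the walk on `[a, b]`. -/
lemma confinement_prob {Ω Ω' : Type*} {mΩ : MeasurableSpace Ω} {mΩ' : MeasurableSpace Ω'}
    (μ : Measure Ω) [IsProbabilityMeasure μ] (μ' : Measure Ω') [IsProbabilityMeasure μ']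
    (ℱ : Filtration ℕ mΩ) (ℱ' : Filtration ℕ mΩ') {a b : ℤ} (hab : a < b)
    {X : ℕ → Ω → ℤ} (hX : IsVRRW μ ℱ 0 X)
    {X' : ℕ → Ω' → ℤ} (hX' : IsVRRWOn μ' ℱ' (Set.Icc a b) 0 X') (n : ℕ) :
    Measurable (fun ω => ENNReal.ofReal (weight a b n fun i => X' i ω)) ∧
    μ {ω | ∀ i ≤ n, X i ω ∈ Set.Icc a b} =
      ∫⁻ ω, ENNReal.ofReal (weight a b n fun i => X' i ω) ∂μ' := by
  let Y : Ω → Fin (n + 1) → ℤ := fun ω i => X i ω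
  let Y' : Ω' → Fin (n + 1) → ℤ := fun ω i => X' i ω
  have hY : Measurable Y := measurable_pi_lambda _ fun i => (hX.1 i).mono (ℱ.le _) le_rfl
  have hY' : Measurable Y' := measurable_pi_lambda _ fun i => (hX'.1 i).mono (ℱ'.le _) le_rfl
  let g : (Fin (n + 1) → ℤ) → ENNReal := fun q => ENNReal.ofReal (weight a b n (extendPath n q))
  have hg : Measurable g := Measurable.of_discrete
  have hgY : (fun ω => ENNReal.ofReal (weight a b n fun i => X' i ω)) = fun ω => g (Y' ω) := by
    ext ω
    simp only [g]
    rw [weight_congr a b (q := extendPath n (Y' ω))]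
    intro i hi
    simp [extendPath, Y', hi]
  let A : Set (Fin (n + 1) → ℤ) := {q | ∀ i, q i ∈ Set.Icc a b}
  have hA : MeasurableSet A := MeasurableSet.of_discrete
  have hE : {ω | ∀ i ≤ n, X i ω ∈ Set.Icc a b} = Y ⁻¹' A := by
    ext ω
    simp only [A, Y, Set.mem_preimage, Set.mem_ofPred_eq]
    exact ⟨fun h i => h i (by omega), fun h i hi => h ⟨i, by omega⟩⟩
  refine ⟨hgY ▸ hg.comp hY', ?_⟩
  rw [hgY, hE, ← Measure.map_apply hY hA, ← lintegral_map hg hY', ← lintegral_indicator_one hA,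
    lintegral_countable', lintegral_countable']
  refine tsum_congr fun q => ?_
  rw [Measure.map_apply hY (measurableSet_singleton q),
    Measure.map_apply hY' (measurableSet_singleton q), cylinder_eq X', cylinder_eq X]
  by_cases hq : q ∈ A
  · have h := path_prob_eq μ μ' ℱ ℱ' hab hX hX' (extendPath n q) n fun i _ => hq _
    rw [Set.indicator_of_mem hq, Pi.one_apply, one_mul, ← ofReal_measureReal, h,
      ENNReal.ofReal_mul (weight_pos a b n _).le, ofReal_measureReal]
  · have : {ω | ∀ i ≤ n, X' i ω = extendPath n q i} = ∅ := by
      rw [← cylinder_eq X']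
      ext ω
      simp only [Set.mem_preimage, Set.mem_singleton_iff, Set.mem_empty_iff_false, iff_false]
      intro h
      subst h
      exact hq fun i => hX'.2.2.1 i ω
    simp [this, hq]

/-- **Corollary (parts)**: With `J = [a, b]` an interval of integers containing `0`, `X` a
VRRW on `ℤ` started at `0` (law `μ`) and `X'` a VRRW on `J` started at `0` (law `μ'`),
suppose `μ'`-almost surely `liminf Z'(n, a+1)/n > 0` and `liminf Z'(n, b−1)/n > 0`.  Then
`P(R ⊆ J) > 0` iff `P_J(Σₙ (Z'(n,a) + Z'(n,b))/n² < ∞) > 0`. -/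
theorem vrrw_confinement_iff_summable
    {Ω Ω' : Type*} {mΩ : MeasurableSpace Ω} {mΩ' : MeasurableSpace Ω'}
    (μ : Measure Ω) [IsProbabilityMeasure μ] (μ' : Measure Ω') [IsProbabilityMeasure μ']
    (ℱ : Filtration ℕ mΩ) (ℱ' : Filtration ℕ mΩ')
    (a b : ℤ) (ha : a ≤ 0) (hb : 0 ≤ b)
    (X : ℕ → Ω → ℤ) (hX : IsVRRW μ ℱ 0 X)
    (X' : ℕ → Ω' → ℤ) (hX' : IsVRRWOn μ' ℱ' (Set.Icc a b) 0 X')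
    (hlim : ∀ᵐ ω ∂μ',
      0 < liminf (fun n : ℕ => occ X' n (a + 1) ω / (n : ℝ)) atTop ∧
      0 < liminf (fun n : ℕ => occ X' n (b - 1) ω / (n : ℝ)) atTop) :
    0 < μ {ω | ∀ k : ℤ, (∃ n, X n ω = k) → k ∈ Set.Icc a b} ↔
      0 < μ' {ω | Summable fun n : ℕ =>
        (occ X' n a ω + occ X' n b ω) / (n : ℝ) ^ 2} := by
  have hab : a < b := lt_of_isVRRWOn μ' ℱ' ha hb hX'
  have hprob := confinement_prob μ μ' ℱ ℱ' hab hX hX'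
  have hE : {ω | ∀ k : ℤ, (∃ n, X n ω = k) → k ∈ Set.Icc a b} =
      ⋂ n : ℕ, {ω | ∀ i ≤ n, X i ω ∈ Set.Icc a b} := by
    ext ω
    simp only [Set.mem_ofPred_eq, Set.mem_iInter]
    constructor
    · exact fun h n i _ => h _ ⟨i, rfl⟩
    · rintro h _ ⟨n, rfl⟩
      exact h n n le_rfl
  have hmeas : ∀ n : ℕ, MeasurableSet {ω | ∀ i ≤ n, X i ω ∈ Set.Icc a b} := by
    intro n
    have : {ω | ∀ i ≤ n, X i ω ∈ Set.Icc a b} = ⋂ i, ⋂ (_ : i ≤ n), X i ⁻¹' Set.Icc a b := by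
      ext ω; simp
    rw [this]
    exact MeasurableSet.iInter fun i => MeasurableSet.iInter fun _ =>
      ℱ.le i _ (hX.1 i measurableSet_Icc)
  have hanti : Antitone fun n : ℕ => {ω | ∀ i ≤ n, X i ω ∈ Set.Icc a b} :=
    fun m n hmn ω h i hi => h i (hi.trans hmn)
  -- Both sides pass to the limit: `P(R ⊆ J)` is the expectation of the limiting weight.
  have hlimit : μ {ω | ∀ k : ℤ, (∃ n, X n ω = k) → k ∈ Set.Icc a b} =
      ∫⁻ ω, ⨅ n, ENNReal.ofReal (weight a b n fun i => X' i ω) ∂μ' := by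
    rw [hE, hanti.measure_iInter (fun n => (hmeas n).nullMeasurableSet) ⟨0, measure_ne_top _ _⟩,
      lintegral_iInf (fun n => (hprob n).1)
        (fun m n hmn ω => ENNReal.ofReal_le_ofReal (weight_antitone a b _ hmn))]
    · exact iInf_congr fun n => (hprob n).2
    · rw [← (hprob 0).2]
      exact measure_ne_top _ _
  rw [hlimit, lintegral_pos_iff_support (Measurable.iInf fun n => (hprob n).1)]
  have hae : Function.support
        (fun ω => ⨅ n, ENNReal.ofReal (weight a b n fun i => X' i ω)) =ᵐ[μ']
      {ω | Summable fun n : ℕ => (occ X' n a ω + occ X' n b ω) / (n : ℝ) ^ 2} := by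
    filter_upwards [hlim] with ω hω
    refine propext (Iff.trans ?_
      (weight_bounded_below_iff_summable (p := fun i => X' i ω) hω.1 hω.2))
    change (⨅ n, ENNReal.ofReal (weight a b n fun i => X' i ω)) ≠ 0 ↔ _
    constructor
    · intro h
      have hle : ∀ n, (⨅ n, ENNReal.ofReal (weight a b n fun i => X' i ω)) ≤
          ENNReal.ofReal (weight a b n fun i => X' i ω) := fun n => iInf_le _ n
      have htop := ne_top_of_le_ne_top ENNReal.ofReal_ne_top (hle 0)
      exact ⟨_, ENNReal.toReal_pos h htop, fun n =>
        ENNReal.toReal_le_of_le_ofReal (weight_pos a b n _).le (hle n)⟩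
    · rintro ⟨δ, hδ, h⟩
      exact ((ENNReal.ofReal_pos.2 hδ).trans_le
        (le_iInf fun n => ENNReal.ofReal_le_ofReal (h n))).ne'
  rw [measure_congr hae]
end
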